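/- In the heat kernel setup, fix σ < 2 and integers a ≥ 1 and a' ≥ 1. Then there is a constant C such that for every f ∈ L^∞(μ) one has ‖P_1^{(a)} f‖_∞ ≤ C·‖f‖_{C^σ,(a')}, where ‖f‖_{C^σ,(a')} := ‖e^{−L}f‖_∞ + sup_{0<t≤1} t^{−σ/2}‖Q_t^{(a')}f‖_∞. (Proposition 2.7.) -/

import Mathlib

open MeasureTheory Metric Set
open scoped ENNReal NNReal

noncomputable section

/-- The (pointwise) supremum norm of a real-valued function, valued in `ℝ≥0∞`. -/
def supNorm {M : Type*} (g : M → ℝ) : ℝ≥0∞ := ⨆ x, (‖g x‖₊ : ℝ≥0∞)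

/-- `γ_a = ∫_0^∞ s^a e^{-s} ds/s`. -/
def gammaInt (a : ℕ) : ℝ := ∫ s in Set.Ioi (0 : ℝ), s ^ a * Real.exp (-s) / s

/-- A conservative heat kernel on a doubling metric measure space, satisfying the
Gaussian upper estimates (UE) for all time derivatives, for `0 < t ≤ 1`. -/
structure HeatKernelSetup (M : Type*) [MeasurableSpace M] [MetricSpace M] where
  μ : Measure M
  p : ℝ → M → M → ℝ
  C_D : ℝ
  C_D_pos : 0 < C_D
  doubling : ∀ (x : M) (r : ℝ), 0 < r →
    μ (Metric.ball x (2 * r)) ≤ ENNReal.ofReal C_D * μ (Metric.ball x r)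
  p_nonneg : ∀ t : ℝ, 0 < t → ∀ x y, 0 ≤ p t x y
  p_symm : ∀ t : ℝ, 0 < t → ∀ x y, p t x y = p t y x
  p_meas : ∀ t : ℝ, 0 < t → Measurable (Function.uncurry (p t))
  semigroup : ∀ s t : ℝ, 0 < s → 0 < t → ∀ x z,
    p (s + t) x z = ∫ y, p s x y * p t y z ∂μ
  conservative : ∀ t : ℝ, 0 < t → ∀ x, ∫ y, p t x y ∂μ = 1
  smooth : ∀ (x y : M) (m : ℕ) (t : ℝ), 0 < t →
    DifferentiableAt ℝ (iteratedDeriv m (fun s => p s x y)) t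
  diff_under_int : ∀ (f : M → ℝ), Measurable f → supNorm f < ⊤ →
    ∀ (m : ℕ) (x : M) (t : ℝ), 0 < t →
      iteratedDeriv m (fun s => ∫ y, p s x y * f y ∂μ) t
        = ∫ y, iteratedDeriv m (fun s => p s x y) t * f y ∂μ
  UE : ∀ m : ℕ, ∃ C, 0 < C ∧ ∃ c, 0 < c ∧ ∀ t : ℝ, 0 < t → t ≤ 1 → ∀ x y,
    |t ^ m * iteratedDeriv m (fun s => p s x y) t|
      ≤ C / Real.sqrt ((μ (Metric.ball x (Real.sqrt t))).toReal
            * (μ (Metric.ball y (Real.sqrt t))).toReal)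
          * Real.exp (-c * dist x y ^ 2 / t)

namespace HeatKernelSetup

variable {M : Type*} [MeasurableSpace M] [MetricSpace M] (H : HeatKernelSetup M)

/-- The semigroup `e^{-tL}` applied to `f`. -/
def S (t : ℝ) (f : M → ℝ) (x : M) : ℝ := ∫ y, H.p t x y * f y ∂H.μ

/-- `Q_t^{(a)} f = (-1)^a t^a ∂_t^a (e^{-tL} f)`. -/
def Q (a : ℕ) (t : ℝ) (f : M → ℝ) (x : M) : ℝ :=
  (-1 : ℝ) ^ a * t ^ a * iteratedDeriv a (fun s => H.S s f x) t

/-- `P_t^{(a)} f = ∑_{k<a} c_{a,k} (-1)^k t^k ∂_t^k (e^{-tL} f)`, where the coefficients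
`c_{a,k} = 1/k!` are determined by `φ_a(x) = (∑_k c_{a,k} x^k) e^{-x}`. -/
def P (a : ℕ) (t : ℝ) (f : M → ℝ) (x : M) : ℝ :=
  ∑ k ∈ Finset.range a, ((Nat.factorial k : ℝ))⁻¹ * (-1 : ℝ) ^ k * t ^ k *
    iteratedDeriv k (fun s => H.S s f x) t

/-- `(tL)P_t^{(a)} f = ∑_{k<a} c_{a,k} (-1)^{k+1} t^{k+1} ∂_t^{k+1} (e^{-tL} f)`. -/
def LP (a : ℕ) (t : ℝ) (f : M → ℝ) (x : M) : ℝ :=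
  ∑ k ∈ Finset.range a, ((Nat.factorial k : ℝ))⁻¹ * (-1 : ℝ) ^ (k + 1) * t ^ (k + 1) *
    iteratedDeriv (k + 1) (fun s => H.S s f x) t

/-- The Hölder norm `‖f‖_{C^σ,(a)} = ‖e^{-L} f‖_∞ + sup_{0<t≤1} t^{-σ/2} ‖Q_t^{(a)} f‖_∞`. -/
def CNorm (a : ℕ) (σ : ℝ) (f : M → ℝ) : ℝ≥0∞ :=
  supNorm (H.S 1 f) +
    ⨆ t ∈ Set.Ioc (0 : ℝ) 1, ENNReal.ofReal (t ^ (-σ / 2)) * supNorm (H.Q a t f)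

/-- The integrand of the paraproduct `Π_g^{(b)}(f)` at frequency scale `t`:
`(tL)P_t^{(b)}( Q_t^{(b-1)} f · P_t^{(b)} g ) + Q_t^{(b-1)}( (tL)P_t^{(b)} f · P_t^{(b)} g )`. -/
def paraInner (b : ℕ) (g f : M → ℝ) (t : ℝ) : M → ℝ := fun y =>
  H.LP b t (fun z => H.Q (b - 1) t f z * H.P b t g z) y
    + H.Q (b - 1) t (fun z => H.LP b t f z * H.P b t g z) y

/-- `Q_s^{(a)} Π_g^{(b)}(f)`, defined by applying `Q_s^{(a)}` under the time integral. -/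
def paraQ (b a : ℕ) (g f : M → ℝ) (s : ℝ) : M → ℝ := fun x =>
  (gammaInt b)⁻¹ * ∫ t in Set.Ioc (0 : ℝ) 1, H.Q a s (H.paraInner b g f t) x / t

/-- `e^{-L} Π_g^{(b)}(f)`, defined by applying `e^{-L}` under the time integral. -/
def paraS (b : ℕ) (g f : M → ℝ) : M → ℝ := fun x =>
  (gammaInt b)⁻¹ * ∫ t in Set.Ioc (0 : ℝ) 1, H.S 1 (H.paraInner b g f t) x / t

/-- The paraproduct `Π_g^{(b)}(f)` as a function, when the integral converges. -/
def paraFn (b : ℕ) (g f : M → ℝ) : M → ℝ := fun x =>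
  (gammaInt b)⁻¹ * ∫ t in Set.Ioc (0 : ℝ) 1, H.paraInner b g f t x / t

/-- The resolution operator `R(v)_t = ∫_0^t P_{t-s}^{(b)} v(s) ds`. -/
def resolve (b : ℕ) (v : ℝ → M → ℝ) (t : ℝ) : M → ℝ := fun x =>
  ∫ s in Set.Ioc (0 : ℝ) t, H.P b (t - s) (v s) x

end HeatKernelSetup

/-
The time derivatives of `e^{-tL} f` at `t = 1` control `P_1^{(a)} f`. Those of order `k ≥ a'` factor
as `∂^{k-a'} e^{-L/2}` applied to `∂^{a'} e^{-L/2} f`; the Gaussian bounds, summed over unit annuli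
with the help of doubling, make the first operator bounded for the supremum norm, and the Hölder
seminorm at the single scale `t = 1/2` controls the second factor. Orders `k < a'` follow by
descending induction: on `[1, 3/2]` the derivative of order `k` varies by at most half the norm of
the derivative of order `k + 1` at time `1`, because `e^{-sL}` is a contraction, and at time `3/2`
it equals `∂^k e^{-L/2}` applied to `e^{-L} f`.
-/

section SupNorm

variable {α : Type*}

lemma enorm_le_supNorm (g : α → ℝ) (x : α) : ‖g x‖ₑ ≤ supNorm g :=
  le_iSup (fun x => ‖g x‖ₑ) x

lemma supNorm_le_iff {g : α → ℝ} {N : ℝ≥0∞} : supNorm g ≤ N ↔ ∀ x, ‖g x‖ₑ ≤ N :=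
  iSup_le_iff

lemma norm_le_toReal_supNorm {g : α → ℝ} (hg : supNorm g < ⊤) (x : α) :
    ‖g x‖ ≤ (supNorm g).toReal := by
  simpa using ENNReal.toReal_mono hg.ne (enorm_le_supNorm g x)

lemma supNorm_const_mul (c : ℝ) (g : α → ℝ) :
    supNorm (fun x => c * g x) = ‖c‖ₑ * supNorm g := by
  simp only [supNorm, ← enorm_eq_nnnorm, enorm_mul, ENNReal.mul_iSup]

variable [MeasurableSpace α]

lemma integrable_mul_of_supNorm_lt_top {μ : Measure α} {k g : α → ℝ} (hk : Integrable k μ)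
    (hg : Measurable g) (hg' : supNorm g < ⊤) : Integrable (fun y => k y * g y) μ :=
  hk.mul_bdd hg.aestronglyMeasurable (.of_forall (norm_le_toReal_supNorm hg'))

lemma lintegral_enorm_mul_le {μ : Measure α} (k : α → ℝ) {g : α → ℝ} (hg : supNorm g < ⊤) :
    ∫⁻ y, ‖k y * g y‖ₑ ∂μ ≤ (∫⁻ y, ‖k y‖ₑ ∂μ) * supNorm g :=
  calc ∫⁻ y, ‖k y * g y‖ₑ ∂μ
      ≤ ∫⁻ y, ‖k y‖ₑ * supNorm g ∂μ := lintegral_mono fun y => by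
        rw [enorm_mul]
        gcongr
        exact enorm_le_supNorm g y
    _ = (∫⁻ y, ‖k y‖ₑ ∂μ) * supNorm g := lintegral_mul_const' _ _ hg.ne

lemma enorm_integral_mul_le {μ : Measure α} (k : α → ℝ) {g : α → ℝ} (hg : supNorm g < ⊤) :
    ‖∫ y, k y * g y ∂μ‖ₑ ≤ (∫⁻ y, ‖k y‖ₑ ∂μ) * supNorm g :=
  (enorm_integral_le_lintegral_enorm _).trans (lintegral_enorm_mul_le k hg)

end SupNorm

section General

variable {α : Type*} [MeasurableSpace α]

lemma exists_measurable_majorant_lintegral_eq_tsum {ι : Type*} [Countable ι]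
    (μ : Measure α) (B : ι → Set α) (c : ι → ℝ≥0∞) :
    ∃ F : α → ℝ≥0∞, Measurable F ∧ ∫⁻ y, F y ∂μ = ∑' i, c i * μ (B i) ∧
      ∀ i, ∀ y ∈ B i, c i ≤ F y := by
  have hT (i : ι) : MeasurableSet (toMeasurable μ (B i)) := measurableSet_toMeasurable _ _
  let g (i : ι) : α → ℝ≥0∞ := (toMeasurable μ (B i)).indicator fun _ => c i
  have hg (i : ι) : Measurable (g i) := measurable_const.indicator (hT i)
  refine ⟨fun y => ∑' i, g i y, Measurable.tsum hg, ?_, fun i y hy => ?_⟩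
  · rw [lintegral_tsum fun i => (hg i).aemeasurable]
    simp only [g, lintegral_indicator_const (hT _), measure_toMeasurable]
  · calc c i = g i y := (indicator_of_mem (subset_toMeasurable μ (B i) hy) fun _ => c i).symm
      _ ≤ ∑' i, g i y := ENNReal.le_tsum i

lemma measurable_of_hasDerivAt {E : Type*} [NormedAddCommGroup E] [NormedSpace ℝ E]
    [MeasurableSpace E] [BorelSpace E] [SecondCountableTopology E] {F : ℝ → α → E} {F' : α → E}
    {t : ℝ} (hF : ∀ s, t ≤ s → Measurable (F s))
    (hF' : ∀ z, HasDerivAt (fun s => F s z) (F' z) t) : Measurable F' := by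
  let h (n : ℕ) : ℝ := 1 / ((n : ℝ) + 1)
  have h_pos (n : ℕ) : 0 < h n := Nat.one_div_pos_of_nat
  have h_tendsto : Filter.Tendsto h Filter.atTop (nhdsWithin 0 (Ioi 0)) :=
    tendsto_nhdsWithin_iff.2 ⟨tendsto_one_div_add_atTop_nhds_zero_nat, .of_forall h_pos⟩
  refine measurable_of_tendsto_metrizable (f := fun n z => (h n)⁻¹ • (F (t + h n) z - F t z))
    (fun n => ?_) (tendsto_pi_nhds.2 fun z => (hF' z).tendsto_slope_zero_right.comp h_tendsto)
  exact ((hF _ (by linarith [h_pos n])).sub (hF t le_rfl)).const_smul _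

lemma summable_pow_mul_exp_neg_mul_sq {D c : ℝ} (hD : 0 < D) (hc : 0 < c) :
    Summable fun n : ℕ => D ^ n * Real.exp (-c * (n : ℝ) ^ 2) := by
  refine Summable.of_nonneg_of_le (fun n => by positivity) (fun n => ?_)
    (Real.summable_exp_neg_nat.mul_left (Real.exp ((Real.log D + 1) ^ 2 / (4 * c))))
  have complete_square :
      n * Real.log D + -c * (n : ℝ) ^ 2 ≤ (Real.log D + 1) ^ 2 / (4 * c) + -n := by
    rw [← sub_eq_add_neg _ (n : ℝ), le_sub_iff_add_le, le_div_iff₀ (by positivity)]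
    nlinarith [sq_nonneg (Real.log D + 1 - 2 * c * n)]
  calc D ^ n * Real.exp (-c * (n : ℝ) ^ 2)
      = Real.exp (n * Real.log D + -c * (n : ℝ) ^ 2) := by
        rw [Real.exp_add, Real.exp_nat_mul, Real.exp_log hD]
    _ ≤ Real.exp ((Real.log D + 1) ^ 2 / (4 * c) + -n) := by gcongr
    _ = Real.exp ((Real.log D + 1) ^ 2 / (4 * c)) * Real.exp (-n) := Real.exp_add _ _

lemma le_mul_sqrt_mul_of_le {v c a b : ℝ} (hv : 0 ≤ v) (hc : 0 < c) (ha : v ≤ c * a)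
    (hb : v ≤ c * b) : v ≤ c * √(a * b) := by
  rw [← div_le_iff₀' hc] at ha hb ⊢
  refine Real.le_sqrt_of_sq_le ?_
  have h0 : 0 ≤ v / c := by positivity
  rw [sq]
  exact mul_le_mul ha hb h0 (h0.trans ha)

lemma iteratedDeriv_iteratedDeriv {E : Type*} [NormedAddCommGroup E] [NormedSpace ℝ E]
    (m k : ℕ) (u : ℝ → E) : iteratedDeriv m (iteratedDeriv k u) = iteratedDeriv (k + m) u := by
  simp only [iteratedDeriv_eq_iterate, add_comm k m, Function.iterate_add_apply]

end General

namespace HeatKernelSetup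

variable {M : Type*} [MeasurableSpace M] [MetricSpace M] (H : HeatKernelSetup M)

section Volume

lemma measureReal_ball_pos_of_le_one (x : M) {r : ℝ} (hr : 0 < r) (hr1 : r ≤ 1) :
    0 < H.μ.real (ball x r) := by
  refine measureReal_nonneg.lt_of_ne' fun hV => ?_
  -- The junk value `C / 0 = 0` of the Gaussian bound makes the kernel vanish identically.
  have hp (y : M) : H.p (r ^ 2) x y = 0 := by
    obtain ⟨C, -, c, -, hUE⟩ := H.UE 0
    have h := hUE (r ^ 2) (by positivity) (pow_le_one₀ hr.le hr1) x y
    rw [Real.sqrt_sq hr.le, ← measureReal_def, hV] at h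
    simpa using h
  have h_one := H.conservative (r ^ 2) (by positivity) x
  simp [hp] at h_one

lemma measure_ball_two_pow_mul_le (x : M) {r : ℝ} (hr : 0 < r) (j : ℕ) :
    H.μ (ball x (2 ^ j * r)) ≤ ENNReal.ofReal (H.C_D ^ j) * H.μ (ball x r) := by
  induction j with
  | zero => simp
  | succ j ih =>
    calc H.μ (ball x (2 ^ (j + 1) * r))
        = H.μ (ball x (2 * (2 ^ j * r))) := by rw [pow_succ', mul_assoc]
      _ ≤ ENNReal.ofReal H.C_D * H.μ (ball x (2 ^ j * r)) := H.doubling x _ (by positivity)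
      _ ≤ ENNReal.ofReal H.C_D * (ENNReal.ofReal (H.C_D ^ j) * H.μ (ball x r)) := by gcongr
      _ = ENNReal.ofReal (H.C_D ^ (j + 1)) * H.μ (ball x r) := by
        rw [pow_succ', ENNReal.ofReal_mul H.C_D_pos.le, mul_assoc]

lemma measure_ball_ne_top (x : M) (r : ℝ) : H.μ (ball x r) ≠ ⊤ := by
  have h_unit : H.μ (ball x 1) ≠ ⊤ := fun h =>
    (H.measureReal_ball_pos_of_le_one x one_pos le_rfl).ne' (by simp [measureReal_def, h])
  obtain ⟨j, hj⟩ := pow_unbounded_of_one_lt r one_lt_two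
  refine ne_top_of_le_ne_top (ENNReal.mul_ne_top ENNReal.ofReal_ne_top h_unit)
    ((measure_mono (ball_subset_ball ?_)).trans (H.measure_ball_two_pow_mul_le x one_pos j))
  rw [mul_one]
  exact hj.le

lemma measureReal_ball_pos (x : M) {r : ℝ} (hr : 0 < r) : 0 < H.μ.real (ball x r) :=
  (H.measureReal_ball_pos_of_le_one x (lt_min hr one_pos) (min_le_right r 1)).trans_le
    (measureReal_mono (ball_subset_ball (min_le_left r 1)) (H.measure_ball_ne_top x r))

lemma measureReal_ball_le {x z : M} {R r : ℝ} {j : ℕ} (hr : 0 < r)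
    (h : R + dist x z ≤ 2 ^ j * r) :
    H.μ.real (ball x R) ≤ H.C_D ^ j * H.μ.real (ball z r) := by
  have h_top : ENNReal.ofReal (H.C_D ^ j) * H.μ (ball z r) ≠ ⊤ :=
    ENNReal.mul_ne_top ENNReal.ofReal_ne_top (H.measure_ball_ne_top z r)
  have h_ball : H.μ (ball x R) ≤ ENNReal.ofReal (H.C_D ^ j) * H.μ (ball z r) :=
    (measure_mono (ball_subset_ball' h)).trans (H.measure_ball_two_pow_mul_le z hr j)
  simpa [measureReal_def, ENNReal.toReal_ofReal (pow_nonneg H.C_D_pos.le j)] using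
    ENNReal.toReal_mono h_top h_ball

lemma exists_measureReal_ball_le_mul_sqrt {δ : ℝ} (hδ : 0 < δ) :
    ∃ j : ℕ, ∀ t, δ ≤ t → ∀ x y, ∀ n : ℕ, dist x y ≤ n + 1 →
      H.μ.real (ball x (n + 1)) ≤
        H.C_D ^ (j + n) * √(H.μ.real (ball x √t) * H.μ.real (ball y √t)) := by
  have hD := H.C_D_pos
  obtain ⟨j, hj⟩ := pow_unbounded_of_one_lt (2 / √δ) one_lt_two
  refine ⟨j, fun t hδt x y n hn => ?_⟩
  have h_radius : (n + 1) + ((n : ℝ) + 1) ≤ 2 ^ (j + n) * √t := by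
    have h_scale : 2 ≤ 2 ^ j * √t := by
      rw [div_lt_iff₀ (Real.sqrt_pos.2 hδ)] at hj
      exact hj.le.trans (by gcongr)
    have h_nat : (n : ℝ) + 1 ≤ 2 ^ n := by exact_mod_cast Nat.lt_two_pow_self
    calc (n + 1) + ((n : ℝ) + 1) = 2 * (n + 1) := by ring
      _ ≤ (2 ^ j * √t) * 2 ^ n := by gcongr
      _ = 2 ^ (j + n) * √t := by ring
  have h_vol (z : M) (hz : dist x z ≤ n + 1) :
      H.μ.real (ball x (n + 1)) ≤ H.C_D ^ (j + n) * H.μ.real (ball z √t) :=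
    H.measureReal_ball_le (Real.sqrt_pos.2 (hδ.trans_le hδt)) (by linarith)
  exact le_mul_sqrt_mul_of_le measureReal_nonneg (by positivity)
    (h_vol x (by rw [dist_self]; positivity)) (h_vol y hn)

lemma sigmaFinite : SigmaFinite H.μ := by
  rcases isEmpty_or_nonempty M with _ | ⟨⟨x⟩⟩
  · rw [Measure.eq_zero_of_isEmpty H.μ]
    infer_instance
  · exact ⟨⟨⟨fun n => ball x n, fun _ => trivial,
      fun n => (H.measure_ball_ne_top x n).lt_top, iUnion_ball_nat x⟩⟩⟩

end Volume

section Kernel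

lemma integrable_p {t : ℝ} (ht : 0 < t) (x : M) : Integrable (H.p t x) H.μ :=
  Integrable.of_integral_ne_zero (by rw [H.conservative t ht x]; exact one_ne_zero)

lemma lintegral_enorm_p {t : ℝ} (ht : 0 < t) (x : M) : ∫⁻ y, ‖H.p t x y‖ₑ ∂H.μ = 1 := by
  rw [← ofReal_integral_norm_eq_lintegral_enorm (H.integrable_p ht x)]
  simp [abs_of_nonneg (H.p_nonneg t ht x _), H.conservative t ht x]

/-- The time derivative `∂_t^k p_t(x, y)` of the heat kernel. -/
def kernelDeriv (k : ℕ) (t : ℝ) (x y : M) : ℝ := iteratedDeriv k (fun s => H.p s x y) t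

lemma hasDerivAt_kernelDeriv (k : ℕ) {t : ℝ} (ht : 0 < t) (x y : M) :
    HasDerivAt (fun s => H.kernelDeriv k s x y) (H.kernelDeriv (k + 1) t x y) t := by
  unfold kernelDeriv
  rw [iteratedDeriv_succ]
  exact (H.smooth x y k t ht).hasDerivAt

lemma measurable_uncurry_kernelDeriv (k : ℕ) {t : ℝ} (ht : 0 < t) :
    Measurable (Function.uncurry (H.kernelDeriv k t)) := by
  induction k generalizing t with
  | zero => simpa [kernelDeriv, Function.uncurry_def] using H.p_meas t ht
  | succ k ih =>
    exact measurable_of_hasDerivAt (F := fun s => Function.uncurry (H.kernelDeriv k s))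
      (fun s hs => ih (ht.trans_le hs)) fun z => H.hasDerivAt_kernelDeriv k ht z.1 z.2

lemma measurable_kernelDeriv (k : ℕ) {t : ℝ} (ht : 0 < t) (x : M) :
    Measurable (H.kernelDeriv k t x) :=
  (H.measurable_uncurry_kernelDeriv k ht).comp measurable_prodMk_left

lemma exists_abs_kernelDeriv_le_on_annuli (m : ℕ) {δ : ℝ} (hδ : 0 < δ) :
    ∃ K, 0 ≤ K ∧ ∃ c, 0 < c ∧ ∀ t ∈ Icc δ 1, ∀ x y, ∀ n : ℕ, n ≤ dist x y → dist x y < n + 1 →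
      |H.kernelDeriv m t x y| ≤
        K * (H.C_D ^ n * Real.exp (-c * (n : ℝ) ^ 2)) / H.μ.real (ball x (n + 1)) := by
  obtain ⟨C, hC, c, hc, hUE⟩ := H.UE m
  have hD := H.C_D_pos
  obtain ⟨j, hj⟩ := H.exists_measureReal_ball_le_mul_sqrt hδ
  refine ⟨C * H.C_D ^ j / δ ^ m, by positivity, c, hc, fun t ⟨hδt, ht1⟩ x y n hn hn' => ?_⟩
  have ht : 0 < t := hδ.trans_le hδt
  have h_prefactor : C / √(H.μ.real (ball x √t) * H.μ.real (ball y √t)) ≤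
      C * H.C_D ^ (j + n) / H.μ.real (ball x (n + 1)) := by
    have hV : 0 < H.μ.real (ball x (n + 1)) := H.measureReal_ball_pos x (by positivity)
    have hVx := H.measureReal_ball_pos x (Real.sqrt_pos.2 ht)
    have hVy := H.measureReal_ball_pos y (Real.sqrt_pos.2 ht)
    rw [div_le_div_iff₀ (by positivity) hV, mul_assoc]
    gcongr
    exact hj t hδt x y n hn'.le
  have h_exp : Real.exp (-c * dist x y ^ 2 / t) ≤ Real.exp (-c * (n : ℝ) ^ 2) := by
    have h_sq : (n : ℝ) ^ 2 * t ≤ dist x y ^ 2 :=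
      (mul_le_of_le_one_right (by positivity) ht1).trans (by gcongr)
    rw [Real.exp_le_exp, div_le_iff₀ ht]
    linarith [mul_le_mul_of_nonneg_left h_sq hc.le]
  calc |H.kernelDeriv m t x y|
      ≤ |t ^ m * H.kernelDeriv m t x y| / δ ^ m := by
        rw [abs_mul, abs_of_pos (pow_pos ht m), le_div_iff₀' (by positivity)]
        gcongr
    _ ≤ C * H.C_D ^ (j + n) / H.μ.real (ball x (n + 1)) *
          Real.exp (-c * (n : ℝ) ^ 2) / δ ^ m := by
        gcongr
        exact (hUE t ht ht1 x y).trans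
          (mul_le_mul h_prefactor h_exp (by positivity) (by positivity))
    _ = C * H.C_D ^ j / δ ^ m * (H.C_D ^ n * Real.exp (-c * (n : ℝ) ^ 2)) /
          H.μ.real (ball x (n + 1)) := by ring

lemma exists_kernelDeriv_majorant (m : ℕ) {δ : ℝ} (hδ : 0 < δ) :
    ∃ K : ℝ≥0, ∀ x, ∃ F : M → ℝ≥0∞, Measurable F ∧ ∫⁻ y, F y ∂H.μ ≤ K ∧
      ∀ t ∈ Icc δ 1, ∀ y, ‖H.kernelDeriv m t x y‖ₑ ≤ F y := by
  obtain ⟨K, hK, c, hc, hker⟩ := H.exists_abs_kernelDeriv_le_on_annuli m hδ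
  have hD := H.C_D_pos
  let b (n : ℕ) : ℝ := K * (H.C_D ^ n * Real.exp (-c * (n : ℝ) ^ 2))
  have hb : Summable b := (summable_pow_mul_exp_neg_mul_sq hD hc).mul_left K
  have hb0 (n : ℕ) : 0 ≤ b n := by positivity
  refine ⟨(∑' n, b n).toNNReal, fun x => ?_⟩
  obtain ⟨F, hF, hFint, hle⟩ := exists_measurable_majorant_lintegral_eq_tsum H.μ
    (fun n : ℕ => ball x (n + 1)) fun n => ENNReal.ofReal (b n / H.μ.real (ball x (n + 1)))
  refine ⟨F, hF, ?_, fun t ht y => ?_⟩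
  · have h_term (n : ℕ) : ENNReal.ofReal (b n / H.μ.real (ball x (n + 1))) * H.μ (ball x (n + 1)) =
        ENNReal.ofReal (b n) := by
      have hV : 0 < H.μ.real (ball x (n + 1)) := H.measureReal_ball_pos x (by positivity)
      rw [← ofReal_measureReal (H.measure_ball_ne_top x _), ← ENNReal.ofReal_mul (by positivity),
        div_mul_cancel₀ _ hV.ne']
    simp only [hFint, h_term]
    exact (ENNReal.ofReal_tsum_of_nonneg hb0 hb).ge
  · have h_lt : dist x y < ⌊dist x y⌋₊ + 1 := Nat.lt_floor_add_one _
    rw [← ofReal_norm]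
    exact (ENNReal.ofReal_le_ofReal
      (hker t ht x y _ (Nat.floor_le dist_nonneg) h_lt)).trans (hle _ y (mem_ball'.2 h_lt))

end Kernel

section Semigroup

/-- The time derivative `∂_t^k (e^{-tL} f)(x)`, so that `Q_t^{(a)} f = (-t)^a timeDeriv a t f`. -/
def timeDeriv (k : ℕ) (t : ℝ) (f : M → ℝ) (x : M) : ℝ := iteratedDeriv k (fun s => H.S s f x) t

lemma timeDeriv_zero (t : ℝ) (f : M → ℝ) : H.timeDeriv 0 t f = H.S t f := by
  ext x
  simp [timeDeriv]

lemma supNorm_S_le {t : ℝ} (ht : 0 < t) {f : M → ℝ} (hf' : supNorm f < ⊤) :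
    supNorm (H.S t f) ≤ supNorm f :=
  supNorm_le_iff.2 fun x =>
    (enorm_integral_mul_le _ hf').trans_eq (by rw [H.lintegral_enorm_p ht x, one_mul])

variable {f : M → ℝ}

lemma timeDeriv_eq_integral (hf : Measurable f) (hf' : supNorm f < ⊤) (k : ℕ) {t : ℝ} (ht : 0 < t)
    (x : M) : H.timeDeriv k t f x = ∫ y, H.kernelDeriv k t x y * f y ∂H.μ :=
  H.diff_under_int f hf hf' k x t ht

lemma measurable_timeDeriv (hf : Measurable f) (hf' : supNorm f < ⊤) (k : ℕ) {t : ℝ} (ht : 0 < t) :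
    Measurable (H.timeDeriv k t f) := by
  have := H.sigmaFinite
  simp only [funext (H.timeDeriv_eq_integral hf hf' k ht)]
  have h_meas : Measurable fun z : M × M => H.kernelDeriv k t z.1 z.2 * f z.2 :=
    (H.measurable_uncurry_kernelDeriv k ht).mul (hf.comp measurable_snd)
  exact h_meas.stronglyMeasurable.integral_prod_right.measurable

lemma measurable_S (hf : Measurable f) (hf' : supNorm f < ⊤) {t : ℝ} (ht : 0 < t) :
    Measurable (H.S t f) :=
  H.timeDeriv_zero t f ▸ H.measurable_timeDeriv hf hf' 0 ht

lemma integrable_p_mul_p_mul (hf : Measurable f) (hf' : supNorm f < ⊤) {s t : ℝ} (hs : 0 < s)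
    (ht : 0 < t) (x : M) :
    Integrable (fun z : M × M => H.p s x z.1 * (H.p t z.1 z.2 * f z.2)) (H.μ.prod H.μ) := by
  have := H.sigmaFinite
  have h_meas : Measurable fun z : M × M => H.p s x z.1 * (H.p t z.1 z.2 * f z.2) :=
    (((H.p_meas s hs).comp measurable_prodMk_left).comp measurable_fst).mul
      ((H.p_meas t ht).mul (hf.comp measurable_snd))
  refine ⟨h_meas.aestronglyMeasurable, ?_⟩
  have h_inner (y : M) : ∫⁻ z, ‖H.p t y z * f z‖ₑ ∂H.μ ≤ supNorm f :=
    (lintegral_enorm_mul_le _ hf').trans_eq (by rw [H.lintegral_enorm_p ht y, one_mul])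
  calc ∫⁻ z, ‖H.p s x z.1 * (H.p t z.1 z.2 * f z.2)‖ₑ ∂H.μ.prod H.μ
      = ∫⁻ y, ‖H.p s x y‖ₑ * ∫⁻ z, ‖H.p t y z * f z‖ₑ ∂H.μ ∂H.μ := by
        rw [lintegral_prod _ h_meas.enorm.aemeasurable]
        simp only [enorm_mul _ (H.p t _ _ * f _), lintegral_const_mul' _ _ enorm_ne_top]
    _ ≤ ∫⁻ y, ‖H.p s x y‖ₑ * supNorm f ∂H.μ := by gcongr with y; exact h_inner y
    _ = supNorm f := by rw [lintegral_mul_const' _ _ hf'.ne, H.lintegral_enorm_p hs x, one_mul]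
    _ < ⊤ := hf'

lemma S_add (hf : Measurable f) (hf' : supNorm f < ⊤) {s t : ℝ} (hs : 0 < s) (ht : 0 < t) :
    H.S (s + t) f = H.S s (H.S t f) := by
  have := H.sigmaFinite
  ext x
  calc H.S (s + t) f x
      = ∫ z, ∫ y, H.p s x y * (H.p t y z * f z) ∂H.μ ∂H.μ := by
        simp only [S, H.semigroup s t hs ht, ← integral_mul_const, mul_assoc]
    _ = ∫ y, ∫ z, H.p s x y * (H.p t y z * f z) ∂H.μ ∂H.μ :=
        (integral_integral_swap (H.integrable_p_mul_p_mul hf hf' hs ht x)).symm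
    _ = H.S s (H.S t f) x := by simp only [S, integral_const_mul]

lemma timeDeriv_add (hf : Measurable f) (hf' : supNorm f < ⊤) (k : ℕ) {s r : ℝ} (hs : 0 < s)
    (hr : 0 < r) : H.timeDeriv k (s + r) f = H.timeDeriv k s (H.S r f) := by
  ext x
  have h_eq : (fun q => H.S (q + r) f x) =ᶠ[nhds s] fun q => H.S q (H.S r f) x := by
    filter_upwards [Ioi_mem_nhds hs] with q hq
    rw [H.S_add hf hf' hq hr]
  calc H.timeDeriv k (s + r) f x
      = iteratedDeriv k (fun q => H.S (q + r) f x) s :=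
        (congrFun (iteratedDeriv_comp_add_const k (fun q => H.S q f x) r) s).symm
    _ = H.timeDeriv k s (H.S r f) x := h_eq.iteratedDeriv_eq k

lemma exists_supNorm_timeDeriv_le (k : ℕ) {δ : ℝ} (hδ : 0 < δ) :
    ∃ K : ℝ≥0, ∀ f : M → ℝ, Measurable f → supNorm f < ⊤ → ∀ t, δ ≤ t →
      supNorm (H.timeDeriv k t f) ≤ K * supNorm f := by
  obtain ⟨K, hK⟩ := H.exists_kernelDeriv_majorant k (lt_min hδ one_pos)
  have h_short (f : M → ℝ) (hf : Measurable f) (hf' : supNorm f < ⊤) (t : ℝ)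
      (ht : t ∈ Icc (min δ 1) 1) : supNorm (H.timeDeriv k t f) ≤ K * supNorm f := by
    refine supNorm_le_iff.2 fun x => ?_
    obtain ⟨F, -, hFint, hle⟩ := hK x
    rw [H.timeDeriv_eq_integral hf hf' k ((lt_min hδ one_pos).trans_le ht.1)]
    refine (enorm_integral_mul_le _ hf').trans ?_
    gcongr
    exact (lintegral_mono (hle t ht)).trans hFint
  refine ⟨K, fun f hf hf' t ht => ?_⟩
  rcases le_or_gt t 1 with ht1 | ht1
  · exact h_short f hf hf' t ⟨(min_le_left δ 1).trans ht, ht1⟩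
  · have hr : 0 < t - 1 := sub_pos.2 ht1
    have h_contr := H.supNorm_S_le hr hf'
    calc supNorm (H.timeDeriv k t f)
        = supNorm (H.timeDeriv k 1 (H.S (t - 1) f)) := by
          rw [← H.timeDeriv_add hf hf' k one_pos hr, add_sub_cancel]
      _ ≤ K * supNorm (H.S (t - 1) f) :=
          h_short _ (H.measurable_S hf hf' hr) (h_contr.trans_lt hf') 1 ⟨min_le_right δ 1, le_rfl⟩
      _ ≤ K * supNorm f := by gcongr

lemma supNorm_timeDeriv_lt_top (hf : Measurable f) (hf' : supNorm f < ⊤) (k : ℕ) {t : ℝ}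
    (ht : 0 < t) : supNorm (H.timeDeriv k t f) < ⊤ := by
  obtain ⟨K, hK⟩ := H.exists_supNorm_timeDeriv_le k ht
  exact (hK f hf hf' t le_rfl).trans_lt (ENNReal.mul_lt_top ENNReal.coe_lt_top hf')

lemma hasDerivAt_timeDeriv_of_lt_one (hf : Measurable f) (hf' : supNorm f < ⊤) (k : ℕ) {t : ℝ}
    (ht : 0 < t) (ht1 : t < 1) (x : M) :
    HasDerivAt (fun s => H.timeDeriv k s f x) (H.timeDeriv (k + 1) t f x) t := by
  obtain ⟨K, hK⟩ := H.exists_kernelDeriv_majorant (k + 1) (half_pos ht)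
  obtain ⟨K₀, hK₀⟩ := H.exists_kernelDeriv_majorant k ht
  obtain ⟨F, hF, hFint, hle⟩ := hK x
  obtain ⟨F₀, -, hF₀int, hle₀⟩ := hK₀ x
  have hF_top : ∫⁻ y, F y ∂H.μ ≠ ⊤ := ne_top_of_le_ne_top ENNReal.coe_ne_top hFint
  have h_meas (m : ℕ) {s : ℝ} (hs : 0 < s) :
      AEStronglyMeasurable (fun y => H.kernelDeriv m s x y * f y) H.μ :=
    ((H.measurable_kernelDeriv m hs x).mul hf).aestronglyMeasurable
  have h_int : Integrable (H.kernelDeriv k t x) H.μ :=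
    ⟨(H.measurable_kernelDeriv k ht x).aestronglyMeasurable,
      ((lintegral_mono (hle₀ t ⟨le_rfl, ht1.le⟩)).trans hF₀int).trans_lt ENNReal.coe_lt_top⟩
  have h_bound : ∀ᵐ y ∂H.μ, ∀ s ∈ Ioo (t / 2) 1,
      ‖H.kernelDeriv (k + 1) s x y * f y‖ ≤ (F y).toReal * (supNorm f).toReal := by
    filter_upwards [ae_lt_top hF hF_top] with y hy s hs
    rw [norm_mul]
    gcongr
    · simpa using ENNReal.toReal_mono hy.ne (hle s (Ioo_subset_Icc_self hs) y)
    · exact norm_le_toReal_supNorm hf' y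
  have h_deriv := (hasDerivAt_integral_of_dominated_loc_of_deriv_le (μ := H.μ)
    (F := fun s y => H.kernelDeriv k s x y * f y)
    (Ioo_mem_nhds (half_lt_self ht) ht1)
    (Filter.mem_of_superset (Ioi_mem_nhds ht) fun s hs => h_meas k hs)
    (integrable_mul_of_supNorm_lt_top h_int hf hf') (h_meas (k + 1) ht) h_bound
    ((integrable_toReal_of_lintegral_ne_top hF.aemeasurable hF_top).mul_const _)
    (.of_forall fun y s hs =>
      (H.hasDerivAt_kernelDeriv k ((half_pos ht).trans hs.1) x y).mul_const _)).2
  rw [H.timeDeriv_eq_integral hf hf' (k + 1) ht]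
  refine h_deriv.congr_of_eventuallyEq ?_
  filter_upwards [Ioi_mem_nhds ht] with s hs using H.timeDeriv_eq_integral hf hf' k hs x

lemma hasDerivAt_timeDeriv (hf : Measurable f) (hf' : supNorm f < ⊤) (k : ℕ) {t : ℝ}
    (ht : 0 < t) (x : M) :
    HasDerivAt (fun s => H.timeDeriv k s f x) (H.timeDeriv (k + 1) t f x) t := by
  rcases lt_or_ge t 1 with ht1 | ht1
  · exact H.hasDerivAt_timeDeriv_of_lt_one hf hf' k ht ht1 x
  · obtain ⟨r, hr, rfl⟩ : ∃ r, 0 < r ∧ t = 1 / 2 + r := ⟨t - 1 / 2, by linarith, by ring⟩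
    have h_deriv := H.hasDerivAt_timeDeriv_of_lt_one (H.measurable_S hf hf' hr)
      ((H.supNorm_S_le hr hf').trans_lt hf') k one_half_pos one_half_lt_one x
    have h_shift := HasDerivAt.comp_sub_const (f := fun q => H.timeDeriv k q (H.S r f) x)
      (1 / 2 + r) r (by rwa [add_sub_cancel_right])
    rw [H.timeDeriv_add hf hf' (k + 1) one_half_pos hr]
    refine h_shift.congr_of_eventuallyEq ?_
    filter_upwards [Ioi_mem_nhds (lt_add_of_pos_left r one_half_pos)] with q hq
    rw [← H.timeDeriv_add hf hf' k (sub_pos.2 hq) hr, sub_add_cancel]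

lemma hasDerivAt_S_timeDeriv (hf : Measurable f) (hf' : supNorm f < ⊤) (k : ℕ) {s r : ℝ}
    (hs : 0 < s) (hr : 0 < r) (x : M) :
    HasDerivAt (fun q => H.S s (H.timeDeriv k q f) x) (H.S s (H.timeDeriv (k + 1) r f) x) r := by
  obtain ⟨K, hK⟩ := H.exists_supNorm_timeDeriv_le (k + 1) (half_pos hr)
  have hK_top : K * supNorm f < ⊤ := ENNReal.mul_lt_top ENNReal.coe_lt_top hf'
  have h_meas (m : ℕ) {q : ℝ} (hq : 0 < q) :
      AEStronglyMeasurable (fun y => H.p s x y * H.timeDeriv m q f y) H.μ :=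
    (H.integrable_p hs x).aestronglyMeasurable.mul
      (H.measurable_timeDeriv hf hf' m hq).aestronglyMeasurable
  have h_bound (y : M) (q : ℝ) (hq : q ∈ Ioi (r / 2)) :
      ‖H.p s x y * H.timeDeriv (k + 1) q f y‖ ≤ H.p s x y * (K * supNorm f).toReal := by
    rw [norm_mul, Real.norm_of_nonneg (H.p_nonneg s hs x y)]
    refine mul_le_mul_of_nonneg_left ?_ (H.p_nonneg s hs x y)
    have h_le := hK f hf hf' q (le_of_lt hq)
    exact (norm_le_toReal_supNorm (h_le.trans_lt hK_top) y).trans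
      (ENNReal.toReal_mono hK_top.ne h_le)
  exact (hasDerivAt_integral_of_dominated_loc_of_deriv_le (μ := H.μ)
    (F := fun q y => H.p s x y * H.timeDeriv k q f y) (Ioi_mem_nhds (half_lt_self hr))
    (Filter.mem_of_superset (Ioi_mem_nhds hr) fun q hq => h_meas k hq)
    (integrable_mul_of_supNorm_lt_top (H.integrable_p hs x) (H.measurable_timeDeriv hf hf' k hr)
      (H.supNorm_timeDeriv_lt_top hf hf' k hr))
    (h_meas (k + 1) hr) (.of_forall h_bound) ((H.integrable_p hs x).mul_const _)
    (.of_forall fun y q hq => (H.hasDerivAt_timeDeriv hf hf' k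
      ((half_pos hr).trans hq) y).const_mul _)).2

lemma timeDeriv_add_eq_S (hf : Measurable f) (hf' : supNorm f < ⊤) (k : ℕ) {s r : ℝ} (hs : 0 < s)
    (hr : 0 < r) : H.timeDeriv k (s + r) f = H.S s (H.timeDeriv k r f) := by
  induction k generalizing r with
  | zero => simp only [timeDeriv_zero, H.S_add hf hf' hs hr]
  | succ k ih =>
    ext x
    have h_eq : (fun q => H.timeDeriv k (s + q) f x) =ᶠ[nhds r]
        fun q => H.S s (H.timeDeriv k q f) x := by
      filter_upwards [Ioi_mem_nhds hr] with q hq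
      rw [ih hq]
    exact ((H.hasDerivAt_timeDeriv hf hf' k (add_pos hs hr) x).comp_const_add s r).unique
      ((H.hasDerivAt_S_timeDeriv hf hf' k hs hr x).congr_of_eventuallyEq h_eq)

lemma timeDeriv_timeDeriv (hf : Measurable f) (hf' : supNorm f < ⊤) (m k : ℕ) {s r : ℝ}
    (hs : 0 < s) (hr : 0 < r) :
    H.timeDeriv m s (H.timeDeriv k r f) = H.timeDeriv (k + m) (s + r) f := by
  ext x
  have h_eq : (fun q => H.S q (H.timeDeriv k r f) x) =ᶠ[nhds s]
      fun q => H.timeDeriv k (q + r) f x := by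
    filter_upwards [Ioi_mem_nhds hs] with q hq
    rw [H.timeDeriv_add_eq_S hf hf' k hq hr]
  calc H.timeDeriv m s (H.timeDeriv k r f) x
      = iteratedDeriv m (fun q => H.timeDeriv k (q + r) f x) s := h_eq.iteratedDeriv_eq m
    _ = iteratedDeriv m (iteratedDeriv k fun q => H.S q f x) (s + r) :=
        congrFun (iteratedDeriv_comp_add_const m (iteratedDeriv k fun q => H.S q f x) r) s
    _ = H.timeDeriv (k + m) (s + r) f x := by rw [iteratedDeriv_iteratedDeriv]; rfl

lemma supNorm_timeDeriv_antitoneOn (hf : Measurable f) (hf' : supNorm f < ⊤) (k : ℕ) :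
    AntitoneOn (fun t => supNorm (H.timeDeriv k t f)) (Ioi 0) := by
  intro r hr t _ hrt
  rcases hrt.eq_or_lt with rfl | hrt
  · exact le_rfl
  · have h_contr := H.supNorm_S_le (sub_pos.2 hrt) (H.supNorm_timeDeriv_lt_top hf hf' k hr)
    rwa [← H.timeDeriv_add_eq_S hf hf' k (sub_pos.2 hrt) hr, sub_add_cancel] at h_contr

lemma supNorm_timeDeriv_le_add (hf : Measurable f) (hf' : supNorm f < ⊤) (k : ℕ) {t h : ℝ}
    (ht : 0 < t) (hh : 0 ≤ h) :
    supNorm (H.timeDeriv k t f) ≤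
      supNorm (H.timeDeriv k (t + h) f) + ENNReal.ofReal h * supNorm (H.timeDeriv (k + 1) t f) := by
  have h_top := H.supNorm_timeDeriv_lt_top hf hf' (k + 1) ht
  refine supNorm_le_iff.2 fun x => ?_
  have h_bound (q : ℝ) (hq : q ∈ Icc t (t + h)) :
      ‖H.timeDeriv (k + 1) q f x‖ ≤ (supNorm (H.timeDeriv (k + 1) t f)).toReal := by
    have hq0 : 0 < q := ht.trans_le hq.1
    exact (norm_le_toReal_supNorm (H.supNorm_timeDeriv_lt_top hf hf' (k + 1) hq0) x).trans
      (ENNReal.toReal_mono h_top.ne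
        (H.supNorm_timeDeriv_antitoneOn hf hf' (k + 1) ht hq0 hq.1))
  have h_mvt : ‖H.timeDeriv k t f x - H.timeDeriv k (t + h) f x‖ ≤
      (supNorm (H.timeDeriv (k + 1) t f)).toReal * h := by
    simpa [abs_of_nonneg hh] using
      (convex_Icc t (t + h)).norm_image_sub_le_of_norm_hasDerivWithin_le
        (fun q hq => (H.hasDerivAt_timeDeriv hf hf' k (ht.trans_le hq.1) x).hasDerivWithinAt)
        h_bound (right_mem_Icc.2 (by linarith)) (left_mem_Icc.2 (by linarith))
  calc ‖H.timeDeriv k t f x‖ₑ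
      ≤ ‖H.timeDeriv k (t + h) f x‖ₑ + ‖H.timeDeriv k t f x - H.timeDeriv k (t + h) f x‖ₑ := by
        simpa using enorm_add_le (H.timeDeriv k (t + h) f x)
          (H.timeDeriv k t f x - H.timeDeriv k (t + h) f x)
    _ ≤ supNorm (H.timeDeriv k (t + h) f) +
          ENNReal.ofReal h * supNorm (H.timeDeriv (k + 1) t f) := by
        gcongr
        · exact enorm_le_supNorm _ x
        · rw [← ofReal_norm, mul_comm, ← ENNReal.ofReal_toReal h_top.ne,
            ← ENNReal.ofReal_mul ENNReal.toReal_nonneg]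
          exact ENNReal.ofReal_le_ofReal h_mvt

lemma exists_supNorm_timeDeriv_one_le_of_ge {n k : ℕ} (hnk : n ≤ k) :
    ∃ K : ℝ≥0, ∀ f : M → ℝ, Measurable f → supNorm f < ⊤ →
      supNorm (H.timeDeriv k 1 f) ≤ K * supNorm (H.timeDeriv n (1 / 2) f) := by
  obtain ⟨K, hK⟩ := H.exists_supNorm_timeDeriv_le (k - n) one_half_pos
  refine ⟨K, fun f hf hf' => ?_⟩
  have h_factor := H.timeDeriv_timeDeriv hf hf' (k - n) n one_half_pos one_half_pos
  rw [Nat.add_sub_cancel' hnk, add_halves] at h_factor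
  rw [← h_factor]
  exact hK _ (H.measurable_timeDeriv hf hf' n one_half_pos)
    (H.supNorm_timeDeriv_lt_top hf hf' n one_half_pos) _ le_rfl

lemma exists_supNorm_timeDeriv_one_le (n k : ℕ) :
    ∃ K : ℝ≥0, ∀ f : M → ℝ, Measurable f → supNorm f < ⊤ →
      supNorm (H.timeDeriv k 1 f) ≤
        K * (supNorm (H.S 1 f) + supNorm (H.timeDeriv n (1 / 2) f)) := by
  have of_ge {k : ℕ} (hnk : n ≤ k) : ∃ K : ℝ≥0, ∀ f : M → ℝ, Measurable f → supNorm f < ⊤ →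
      supNorm (H.timeDeriv k 1 f) ≤
        K * (supNorm (H.S 1 f) + supNorm (H.timeDeriv n (1 / 2) f)) := by
    obtain ⟨K, hK⟩ := H.exists_supNorm_timeDeriv_one_le_of_ge hnk
    exact ⟨K, fun f hf hf' => (hK f hf hf').trans (by gcongr; exact le_add_self)⟩
  rcases le_total n k with hnk | hkn
  · exact of_ge hnk
  induction hkn using Nat.decreasingInduction with
  | self => exact of_ge le_rfl
  | of_succ k _ ih =>
    obtain ⟨K, hK⟩ := ih
    obtain ⟨K', hK'⟩ := H.exists_supNorm_timeDeriv_le k one_half_pos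
    refine ⟨K' + K, fun f hf hf' => ?_⟩
    let N := supNorm (H.S 1 f) + supNorm (H.timeDeriv n (1 / 2) f)
    have h_later : supNorm (H.timeDeriv k (1 + 1 / 2) f) ≤ K' * N := by
      rw [add_comm, H.timeDeriv_add hf hf' k one_half_pos one_pos]
      refine (hK' _ (H.measurable_S hf hf' one_pos)
        ((H.supNorm_S_le one_pos hf').trans_lt hf') _ le_rfl).trans ?_
      gcongr
      exact le_self_add
    calc supNorm (H.timeDeriv k 1 f)
        ≤ supNorm (H.timeDeriv k (1 + 1 / 2) f) +
            ENNReal.ofReal (1 / 2) * supNorm (H.timeDeriv (k + 1) 1 f) :=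
          H.supNorm_timeDeriv_le_add hf hf' k one_pos one_half_pos.le
      _ ≤ K' * N + 1 * (K * N) := by
          gcongr
          · exact ENNReal.ofReal_le_one.2 one_half_lt_one.le
          · exact hK f hf hf'
      _ = ↑(K' + K) * N := by rw [ENNReal.coe_add]; ring

end Semigroup

section Holder

lemma supNorm_Q (a : ℕ) (t : ℝ) (f : M → ℝ) :
    supNorm (H.Q a t f) = ENNReal.ofReal (|t| ^ a) * supNorm (H.timeDeriv a t f) := by
  have h_coeff : ‖(-1 : ℝ) ^ a * t ^ a‖ₑ = ENNReal.ofReal (|t| ^ a) := by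
    rw [Real.enorm_eq_ofReal_abs, abs_mul, abs_pow, abs_pow, abs_neg, abs_one, one_pow, one_mul]
  rw [← h_coeff]
  exact supNorm_const_mul _ (H.timeDeriv a t f)

lemma exists_supNorm_timeDeriv_le_CNorm (σ : ℝ) (n : ℕ) {t : ℝ} (ht : t ∈ Ioc (0 : ℝ) 1) :
    ∃ K : ℝ≥0, ∀ f : M → ℝ, supNorm (H.timeDeriv n t f) ≤ K * H.CNorm n σ f := by
  let w : ℝ := t ^ (-σ / 2) * |t| ^ n
  have hw : 0 < w := mul_pos (Real.rpow_pos_of_pos ht.1 _) (pow_pos (abs_pos.2 ht.1.ne') n)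
  refine ⟨w⁻¹.toNNReal, fun f => ?_⟩
  have h_scale : ENNReal.ofReal w * supNorm (H.timeDeriv n t f) ≤ H.CNorm n σ f :=
    calc ENNReal.ofReal w * supNorm (H.timeDeriv n t f)
        = ENNReal.ofReal (t ^ (-σ / 2)) * supNorm (H.Q n t f) := by
          rw [H.supNorm_Q, ENNReal.ofReal_mul (Real.rpow_nonneg ht.1.le _), mul_assoc]
      _ ≤ ⨆ q ∈ Ioc (0 : ℝ) 1, ENNReal.ofReal (q ^ (-σ / 2)) * supNorm (H.Q n q f) :=
          le_iSup₂ (f := fun q (_ : q ∈ Ioc (0 : ℝ) 1) =>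
            ENNReal.ofReal (q ^ (-σ / 2)) * supNorm (H.Q n q f)) t ht
      _ ≤ H.CNorm n σ f := le_add_self
  calc supNorm (H.timeDeriv n t f)
      = ENNReal.ofReal w⁻¹ * (ENNReal.ofReal w * supNorm (H.timeDeriv n t f)) := by
        rw [← mul_assoc, ← ENNReal.ofReal_mul (by positivity), inv_mul_cancel₀ hw.ne',
          ENNReal.ofReal_one, one_mul]
    _ ≤ ENNReal.ofReal w⁻¹ * H.CNorm n σ f := by gcongr

lemma exists_supNorm_timeDeriv_one_le_CNorm (σ : ℝ) (n k : ℕ) :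
    ∃ K : ℝ≥0, ∀ f : M → ℝ, Measurable f → supNorm f < ⊤ →
      supNorm (H.timeDeriv k 1 f) ≤ K * H.CNorm n σ f := by
  obtain ⟨K, hK⟩ := H.exists_supNorm_timeDeriv_one_le n k
  obtain ⟨K', hK'⟩ := H.exists_supNorm_timeDeriv_le_CNorm σ n ⟨one_half_pos, one_half_lt_one.le⟩
  refine ⟨K * (1 + K'), fun f hf hf' => (hK f hf hf').trans ?_⟩
  calc K * (supNorm (H.S 1 f) + supNorm (H.timeDeriv n (1 / 2) f))
      ≤ K * (H.CNorm n σ f + K' * H.CNorm n σ f) := by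
        gcongr
        · exact le_self_add
        · exact hK' f
    _ = ↑(K * (1 + K')) * H.CNorm n σ f := by push_cast; ring

lemma supNorm_P_one_le (a : ℕ) (f : M → ℝ) :
    supNorm (H.P a 1 f) ≤ ∑ k ∈ Finset.range a, supNorm (H.timeDeriv k 1 f) := by
  refine supNorm_le_iff.2 fun x => (enorm_sum_le _ _).trans (Finset.sum_le_sum fun k _ => ?_)
  have h_coeff : ‖((k.factorial : ℝ))⁻¹ * (-1) ^ k * 1 ^ k‖ₑ ≤ 1 := by
    rw [Real.enorm_eq_ofReal_abs, ENNReal.ofReal_le_one]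
    simpa [abs_mul] using inv_le_one_of_one_le₀ (Nat.one_le_cast.2 k.factorial_pos)
  rw [enorm_mul]
  exact (mul_le_of_le_one_left' h_coeff).trans (enorm_le_supNorm (H.timeDeriv k 1 f) x)

end Holder

end HeatKernelSetup

theorem low_frequency_bounded_on_holder_general
    {M : Type*} [MeasurableSpace M] [MetricSpace M] (H : HeatKernelSetup M)
    (σ : ℝ) (a a' : ℕ) :
    ∃ C, 0 < C ∧ ∀ f : M → ℝ, Measurable f → supNorm f < ⊤ →
      supNorm (H.P a 1 f) ≤ ENNReal.ofReal C * H.CNorm a' σ f := by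
  choose K hK using H.exists_supNorm_timeDeriv_one_le_CNorm σ a'
  refine ⟨↑(∑ k ∈ Finset.range a, K k + 1), by positivity, fun f hf hf' => ?_⟩
  calc supNorm (H.P a 1 f)
      ≤ ∑ k ∈ Finset.range a, supNorm (H.timeDeriv k 1 f) := H.supNorm_P_one_le a f
    _ ≤ ∑ k ∈ Finset.range a, K k * H.CNorm a' σ f :=
        Finset.sum_le_sum fun k _ => hK k f hf hf'
    _ ≤ ENNReal.ofReal ↑(∑ k ∈ Finset.range a, K k + 1) * H.CNorm a' σ f := by
        rw [← Finset.sum_mul, ENNReal.ofReal_coe_nnreal]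
        gcongr
        push_cast
        exact le_self_add

/-- **Proposition 2.7.** For `σ < 2` and integers `a, a' ≥ 1`, the low-frequency
operator `P_1^{(a)}` is bounded from `C^σ` to `L^∞`: `‖P_1^{(a)} f‖_∞ ≤ C ‖f‖_{C^σ,(a')}`. -/
theorem low_frequency_bounded_on_holder
    {M : Type*} [MeasurableSpace M] [MetricSpace M] (H : HeatKernelSetup M)
    (σ : ℝ) (hσ : σ < 2) (a a' : ℕ) (ha : 1 ≤ a) (ha' : 1 ≤ a') :
    ∃ C, 0 < C ∧ ∀ f : M → ℝ, Measurable f → supNorm f < ⊤ →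
      supNorm (H.P a 1 f) ≤ ENNReal.ofReal C * H.CNorm a' σ f :=
  low_frequency_bounded_on_holder_general H σ a a'
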